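/- arXiv:2404.15843 — 6 statements merged into one kernel-verified Lean document; each statement's English description precedes it below -/
import Mathlib

section
/- For every θ ∈ 𝕋, every sample size n, and every α ∈ [0,1], the possibilistic IM contour is valid at θ: P_θ^n{ x^n ∈ 𝕏^n : π_{x^n}(θ) ≤ α } ≤ α. -/
open MeasureTheory

/-- Likelihood of an iid sample: `L_{x^n}(θ) = ∏ᵢ p_θ(xᵢ)`. -/
noncomputable def likelihood {𝕏 𝕋 : Type*} (p : 𝕋 → 𝕏 → ℝ) {n : ℕ}
    (xn : Fin n → 𝕏) (θ : 𝕋) : ℝ :=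
  ∏ i, p θ (xn i)

/-- Relative likelihood: `R(x^n, θ) = L_{x^n}(θ) / sup_ϑ L_{x^n}(ϑ)`. -/
noncomputable def relLik {𝕏 𝕋 : Type*} (p : 𝕋 → 𝕏 → ℝ) {n : ℕ}
    (xn : Fin n → 𝕏) (θ : 𝕋) : ℝ :=
  likelihood p xn θ / ⨆ ϑ, likelihood p xn ϑ

/-- Possibilistic IM contour: `π_{x^n}(θ) = P_θ^n{ R(X^n, θ) ≤ R(x^n, θ) }`. -/
noncomputable def contour {𝕏 𝕋 : Type*} [MeasurableSpace 𝕏]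
    (P : 𝕋 → Measure 𝕏) (p : 𝕋 → 𝕏 → ℝ) {n : ℕ}
    (xn : Fin n → 𝕏) (θ : 𝕋) : ℝ :=
  ((Measure.pi fun _ : Fin n => P θ) {y | relLik p y θ ≤ relLik p xn θ}).toReal

theorem aux_real (m : Measure ℝ) [IsProbabilityMeasure m] (a : ENNReal) :
    MeasurableSet {t : ℝ | m (Set.Iic t) ≤ a} ∧ m {t : ℝ | m (Set.Iic t) ≤ a} ≤ a := by
  have hl : IsLowerSet {t : ℝ | m (Set.Iic t) ≤ a} := fun x y hyx hx =>
    (measure_mono (Set.Iic_subset_Iic.2 hyx)).trans hx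
  have hS : MeasurableSet {t : ℝ | m (Set.Iic t) ≤ a} := hl.ordConnected.measurableSet
  refine ⟨hS, ?_⟩
  rw [hS.measure_eq_iSup_isCompact_of_ne_top (measure_ne_top _ _)]
  refine iSup₂_le fun K hK => iSup_le fun hc => ?_
  rcases K.eq_empty_or_nonempty with rfl | hne
  · simp
  · obtain ⟨t, ht, hmax⟩ := hc.exists_isGreatest hne
    exact (measure_mono (fun x hx => hmax hx)).trans (hK ht)

/-- validity of the possibilistic IM contour:
`P_θ^n{ x^n : π_{x^n}(θ) ≤ α } ≤ α` for all `θ`, `n`, and `α ∈ [0,1]`. -/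
theorem im_contour_valid {𝕏 𝕋 : Type*} [MeasurableSpace 𝕏]
    (μ : Measure 𝕏) [SigmaFinite μ]
    (P : 𝕋 → Measure 𝕏) [∀ θ, IsProbabilityMeasure (P θ)]
    (p : 𝕋 → 𝕏 → ℝ)
    (hdensity : ∀ θ, P θ = μ.withDensity fun x => ENNReal.ofReal (p θ x))
    (hsup_pos : ∀ (n : ℕ) (xn : Fin n → 𝕏), 0 < ⨆ ϑ, likelihood p xn ϑ)
    (hsup_fin : ∀ (n : ℕ) (xn : Fin n → 𝕏),
      BddAbove (Set.range fun ϑ => likelihood p xn ϑ))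
    (hmeas : ∀ (n : ℕ) (θ : 𝕋), Measurable fun xn : Fin n → 𝕏 => relLik p xn θ)
    (θ : 𝕋) (n : ℕ) (α : ℝ) (hα0 : 0 ≤ α) (hα1 : α ≤ 1) :
    (Measure.pi fun _ : Fin n => P θ) {xn | contour P p xn θ ≤ α}
      ≤ ENNReal.ofReal α := by
  have hf := hmeas n θ
  set ν : Measure (Fin n → 𝕏) := Measure.pi fun _ : Fin n => P θ with hν
  have : IsProbabilityMeasure (ν.map fun xn : Fin n → 𝕏 => relLik p xn θ) :=
    Measure.isProbabilityMeasure_map hf.aemeasurable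
  obtain ⟨h1, h2⟩ := aux_real (ν.map fun xn : Fin n → 𝕏 => relLik p xn θ) (ENNReal.ofReal α)
  rw [Measure.map_apply hf h1] at h2
  refine (measure_mono ?_).trans h2
  intro x hx
  simp only [Set.mem_preimage, Set.mem_setOf_eq]
  rw [Measure.map_apply hf measurableSet_Iic]
  exact (ENNReal.le_ofReal_iff_toReal_le (measure_ne_top _ _) hα0).2 hx
end

section
/- Let H ⊆ 𝕋 be a hypothesis and suppose the true parameter Θ belongs to H. Then the test that rejects the hypothesis 'Θ ∈ H' when Π̄_{x^n}(H) ≤ α controls the frequentist Type I error rate at level α: P_Θ^n{ x^n : Π̄_{x^n}(H) ≤ α } ≤ α for every α ∈ [0,1]. -/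
open MeasureTheory

/-- Possibility measure: `Π̄_{x^n}(H) = sup_{θ ∈ H} π_{x^n}(θ)`. -/
noncomputable def upperProb {𝕏 𝕋 : Type*} [MeasurableSpace 𝕏]
    (P : 𝕋 → Measure 𝕏) (p : 𝕋 → 𝕏 → ℝ) {n : ℕ}
    (xn : Fin n → 𝕏) (H : Set 𝕋) : ℝ :=
  ⨆ θ ∈ H, contour P p xn θ

theorem aux_measure_cdf_le {Ω : Type*} [MeasurableSpace Ω] (ν : Measure Ω)
    (R : Ω → ℝ) (c : ENNReal) :
    ν {x | ν {y | R y ≤ R x} ≤ c} ≤ c := by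
  by_cases hmax : ∃ x, ν {y | R y ≤ R x} ≤ c ∧ ∀ z, ν {y | R y ≤ R z} ≤ c → R z ≤ R x
  · obtain ⟨x, hx, hz⟩ := hmax
    exact (measure_mono (fun z h => hz z h)).trans hx
  · push Not at hmax
    let A : Set ℚ := {q | ν {y | R y ≤ (q : ℝ)} ≤ c}
    have hsub : {x | ν {y | R y ≤ R x} ≤ c} ⊆ ⋃ q ∈ A, {y | R y ≤ (q : ℝ)} := by
      intro x hx
      obtain ⟨z, hz, hlt⟩ := hmax x hx
      obtain ⟨q, h1, h2⟩ := exists_rat_btwn hlt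
      refine Set.mem_biUnion (x := q) ?_ h1.le
      exact (measure_mono (fun y (hy : R y ≤ q) => hy.trans h2.le)).trans hz
    refine (measure_mono hsub).trans ?_
    rw [measure_biUnion_eq_iSup A.to_countable]
    · exact iSup₂_le fun q hq => hq
    · intro a ha b hb
      rcases le_total a b with h | h
      · exact ⟨b, hb, fun y (hy : R y ≤ a) => hy.trans (by exact_mod_cast h), fun y hy => hy⟩
      · exact ⟨a, ha, fun y hy => hy, fun y (hy : R y ≤ b) => hy.trans (by exact_mod_cast h)⟩

/-- the test rejecting "Θ ∈ H" when `Π̄_{x^n}(H) ≤ α` controls the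
frequentist Type I error at level `α`: if `Θ ∈ H` then
`P_Θ^n{ x^n : Π̄_{x^n}(H) ≤ α } ≤ α` for every `α ∈ [0,1]`. -/
theorem im_test_typeI_error {𝕏 𝕋 : Type*} [MeasurableSpace 𝕏]
    (μ : Measure 𝕏) [SigmaFinite μ]
    (P : 𝕋 → Measure 𝕏) [∀ θ, IsProbabilityMeasure (P θ)]
    (p : 𝕋 → 𝕏 → ℝ)
    (hdensity : ∀ θ, P θ = μ.withDensity fun x => ENNReal.ofReal (p θ x))
    (hsup_pos : ∀ (m : ℕ) (xn : Fin m → 𝕏), 0 < ⨆ ϑ, likelihood p xn ϑ)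
    (hsup_fin : ∀ (m : ℕ) (xn : Fin m → 𝕏),
      BddAbove (Set.range fun ϑ => likelihood p xn ϑ))
    (hmeas : ∀ (m : ℕ) (θ : 𝕋), Measurable fun xn : Fin m → 𝕏 => relLik p xn θ)
    (H : Set 𝕋) (Θ : 𝕋) (hΘH : Θ ∈ H)
    (n : ℕ) (α : ℝ) (hα0 : 0 ≤ α) (hα1 : α ≤ 1) :
    (Measure.pi fun _ : Fin n => P Θ) {xn | upperProb P p xn H ≤ α}
      ≤ ENNReal.ofReal α := by
  refine le_trans (measure_mono ?_) (aux_measure_cdf_le (Measure.pi fun _ : Fin n => P Θ)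
    (fun xn => relLik p xn Θ) (ENNReal.ofReal α))
  intro xn hxn
  have hxn' : upperProb P p xn H ≤ α := hxn
  have hle1 : ∀ θ, contour P p xn θ ≤ 1 := fun θ => by
    unfold contour
    exact ENNReal.toReal_le_of_le_ofReal zero_le_one (by simpa using prob_le_one)
  have hb : BddAbove (Set.range fun θ => ⨆ (_ : θ ∈ H), contour P p xn θ) := by
    refine ⟨1, ?_⟩
    rintro _ ⟨θ, rfl⟩
    exact Real.iSup_le (fun _ => hle1 θ) zero_le_one
  have h1 : contour P p xn Θ ≤ upperProb P p xn H := by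
    have := le_ciSup hb Θ
    simpa [upperProb, hΘH] using this
  have h2 := h1.trans hxn'
  exact (ENNReal.le_ofReal_iff_toReal_le (measure_ne_top _ _) hα0).2 h2
end

section
/- For every α ∈ [0,1], the set C_α(x^n) = { θ ∈ 𝕋 : π_{x^n}(θ) > α } is a 100(1−α)% frequentist confidence set: for every θ ∈ 𝕋 and every n, P_θ^n{ x^n : θ ∈ C_α(x^n) } ≥ 1 − α. -/
open MeasureTheory

/-- Probability integral transform inequality on the real line. -/
theorem measure_cdf_le_aux (m : Measure ℝ) [IsFiniteMeasure m] (a : ENNReal) :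
    MeasurableSet {t : ℝ | m (Set.Iic t) ≤ a} ∧ m {t : ℝ | m (Set.Iic t) ≤ a} ≤ a := by
  have hl : IsLowerSet {t : ℝ | m (Set.Iic t) ≤ a} := fun s t hts hs =>
    (measure_mono (Set.Iic_subset_Iic.mpr hts)).trans hs
  have hS : MeasurableSet {t : ℝ | m (Set.Iic t) ≤ a} := hl.ordConnected.measurableSet
  refine ⟨hS, ?_⟩
  rw [hS.measure_eq_iSup_isCompact]
  refine iSup₂_le fun K hK => iSup_le fun hc => ?_
  rcases K.eq_empty_or_nonempty with rfl | hne
  · simp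
  · obtain ⟨t, ht, hmax⟩ := hc.exists_isGreatest hne
    exact (measure_mono fun x hx => hmax hx).trans (hK ht)

/-- the IM plausibility region
`C_α(x^n) = { θ : π_{x^n}(θ) > α }` is a `100(1−α)%` confidence set:
`P_θ^n{ x^n : θ ∈ C_α(x^n) } ≥ 1 − α` for all `θ` and `n`. -/
theorem im_confidence_set {𝕏 𝕋 : Type*} [MeasurableSpace 𝕏]
    (μ : Measure 𝕏) [SigmaFinite μ]
    (P : 𝕋 → Measure 𝕏) [∀ θ, IsProbabilityMeasure (P θ)]
    (p : 𝕋 → 𝕏 → ℝ)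
    (hdensity : ∀ θ, P θ = μ.withDensity fun x => ENNReal.ofReal (p θ x))
    (hsup_pos : ∀ (m : ℕ) (xn : Fin m → 𝕏), 0 < ⨆ ϑ, likelihood p xn ϑ)
    (hsup_fin : ∀ (m : ℕ) (xn : Fin m → 𝕏),
      BddAbove (Set.range fun ϑ => likelihood p xn ϑ))
    (hmeas : ∀ (m : ℕ) (θ : 𝕋), Measurable fun xn : Fin m → 𝕏 => relLik p xn θ)
    (α : ℝ) (hα0 : 0 ≤ α) (hα1 : α ≤ 1) (θ : 𝕋) (n : ℕ) :
    ENNReal.ofReal (1 - α)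
      ≤ (Measure.pi fun _ : Fin n => P θ) {xn | θ ∈ {ϑ | α < contour P p xn ϑ}} := by
  have hf := hmeas n θ
  set ν := Measure.pi fun _ : Fin n => P θ with hν
  obtain ⟨hS, hle⟩ := measure_cdf_le_aux (ν.map fun xn => relLik p xn θ) (ENNReal.ofReal α)
  rw [Measure.map_apply hf hS] at hle
  have hS' := hf hS
  have hset : {xn : Fin n → 𝕏 | θ ∈ {ϑ | α < contour P p xn ϑ}}
      = ((fun xn : Fin n → 𝕏 => relLik p xn θ) ⁻¹'
        {t : ℝ | (ν.map fun xn => relLik p xn θ) (Set.Iic t) ≤ ENNReal.ofReal α})ᶜ := by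
    ext x
    simp only [Set.mem_setOf_eq, Set.mem_compl_iff, Set.mem_preimage, not_le]
    rw [Measure.map_apply hf measurableSet_Iic,
      ENNReal.ofReal_lt_iff_lt_toReal hα0 (measure_ne_top _ _)]
    rfl
  rw [hset, prob_compl_eq_one_sub hS', ENNReal.ofReal_sub _ hα0, ENNReal.ofReal_one]
  exact tsub_le_tsub_left hle 1
end

section
/- The probability-to-possibility transform dominates the original probability: for every measurable set B ⊆ 𝕑, P(B) ≤ sup_{z ∈ B} π(z), i.e., the possibility measure Π̄(B) = sup_{z∈B} π(z) determined by the contour π satisfies Π̄(B) ≥ P(B), so P belongs to the credal set of Π̄. -/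
open MeasureTheory

/-- Probability-to-possibility transform of `P` with density `p`:
`π(z) = P{ z' : p(z') ≤ p(z) }`. -/
noncomputable def probToPoss {𝕑 : Type*} [MeasurableSpace 𝕑]
    (P : Measure 𝕑) (p : 𝕑 → ℝ) (z : 𝕑) : ℝ :=
  (P {w | p w ≤ p z}).toReal

/-- the probability-to-possibility transform dominates the original
probability: for every measurable `B`, `P(B) ≤ sup_{z ∈ B} π(z)`, i.e. `P` belongs
to the credal set of the possibility measure `Π̄(B) = sup_{z ∈ B} π(z)`. -/
theorem probToPoss_dominates {𝕑 : Type*} [MeasurableSpace 𝕑]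
    (μ : Measure 𝕑) [SigmaFinite μ]
    (P : Measure 𝕑) [IsProbabilityMeasure P]
    (p : 𝕑 → ℝ) (hp : Measurable p)
    (hdensity : P = μ.withDensity fun z => ENNReal.ofReal (p z))
    (B : Set 𝕑) (hB : MeasurableSet B) :
    (P B).toReal ≤ ⨆ z ∈ B, probToPoss P p z := by
  have hle1 : ∀ z, probToPoss P p z ≤ 1 := fun z => by
    have h : P {w | p w ≤ p z} ≤ 1 := prob_le_one
    exact ENNReal.toReal_le_of_le_ofReal zero_le_one (by simpa using h)
  have hle : ∀ z ∈ B, probToPoss P p z ≤ ⨆ z ∈ B, probToPoss P p z := by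
    intro z hz
    have hb : BddAbove (Set.range fun z => ⨆ _ : z ∈ B, probToPoss P p z) := by
      refine ⟨1, ?_⟩
      rintro _ ⟨y, rfl⟩
      exact Real.iSup_le (fun _ => hle1 y) zero_le_one
    have h := le_ciSup hb z
    simpa [hz] using h
  have h0 : 0 ≤ ⨆ z ∈ B, probToPoss P p z :=
    Real.iSup_nonneg fun z => Real.iSup_nonneg fun _ => ENNReal.toReal_nonneg
  by_cases hmax : ∃ z ∈ B, ∀ y ∈ B, p y ≤ p z
  · obtain ⟨z, hz, hy⟩ := hmax
    refine le_trans ?_ (hle z hz)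
    exact ENNReal.toReal_mono (measure_ne_top _ _) (measure_mono fun y h => hy y h)
  · push Not at hmax
    obtain ⟨T, hTB, hTc, hTU⟩ := TopologicalSpace.isOpen_biUnion_countable B
      (fun z => Set.Iio (p z)) (fun z _ => isOpen_Iio)
    have hsub : B ⊆ ⋃ z ∈ T, {w | p w ≤ p z} := by
      intro x hx
      obtain ⟨y, hy, hxy⟩ := hmax x hx
      have h : p x ∈ ⋃ z ∈ B, Set.Iio (p z) := Set.mem_biUnion hy hxy
      rw [← hTU] at h
      simp only [Set.mem_iUnion, Set.mem_Iio] at h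
      obtain ⟨t, ht, hxt⟩ := h
      exact Set.mem_biUnion ht (le_of_lt hxt)
    have hdir : DirectedOn (Function.onFun (· ⊆ ·) fun z => {w | p w ≤ p z}) T := by
      intro a ha b hb
      rcases le_total (p a) (p b) with h | h
      · exact ⟨b, hb, fun w hw => le_trans hw h, fun w hw => hw⟩
      · exact ⟨a, ha, fun w hw => hw, fun w hw => le_trans hw h⟩
    refine ENNReal.toReal_le_of_le_ofReal h0 ((measure_mono hsub).trans ?_)
    rw [measure_biUnion_eq_iSup hTc hdir]
    refine iSup₂_le fun z hz => ?_
    rw [ENNReal.le_ofReal_iff_toReal_le (measure_ne_top _ _) h0]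
    exact hle z (hTB hz)
end

section
/- Minimality of the probability-to-possibility transform: let q : 𝕑 → [0,1] be any function that (i) is order-consistent with the density p, meaning p(z) ≤ p(z') implies q(z) ≤ q(z'), and (ii) dominates P, meaning P(B) ≤ sup_{z∈B} q(z) for every measurable B ⊆ 𝕑. Then π(z) ≤ q(z) for every z ∈ 𝕑; that is, among order-consistent contours whose credal sets contain P, the probability-to-possibility transform π is pointwise smallest. -/
open MeasureTheory

/-- minimality of the probability-to-possibility transform: if
`q : 𝕑 → [0,1]` is order-consistent with the density `p` and its possibility
measure dominates `P`, then `π ≤ q` pointwise. -/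
theorem probToPoss_minimal {𝕑 : Type*} [MeasurableSpace 𝕑]
    (μ : Measure 𝕑) [SigmaFinite μ]
    (P : Measure 𝕑) [IsProbabilityMeasure P]
    (p : 𝕑 → ℝ) (hp : Measurable p)
    (hdensity : P = μ.withDensity fun z => ENNReal.ofReal (p z))
    (q : 𝕑 → ℝ) (hq01 : ∀ z, q z ∈ Set.Icc (0 : ℝ) 1)
    (horder : ∀ z z', p z ≤ p z' → q z ≤ q z')
    (hdom : ∀ B : Set 𝕑, MeasurableSet B → (P B).toReal ≤ ⨆ z ∈ B, q z) :
    ∀ z, probToPoss P p z ≤ q z := by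
  intro z
  refine (hdom _ (measurableSet_le hp measurable_const)).trans ?_
  exact Real.iSup_le (fun w => Real.iSup_le (fun hw => horder w z hw) (hq01 z).1) (hq01 z).1
end

section
/- In the Gaussian location model the IM contour evaluated at the true parameter is exactly uniformly distributed: if X_1,…,X_n are iid N(Θ, σ²) with σ² > 0 known, then under P_Θ^n the random variable π_{X^n}(Θ) has the Uniform(0,1) distribution, for every n. -/
open MeasureTheory ProbabilityTheory

open Filter Topology in
lemma pit_aux (ν : Measure ℝ) [IsProbabilityMeasure ν] [NullSingletonClass ν] :
    ν.map (cdf ν) = volume.restrict (Set.Icc (0 : ℝ) 1) := by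
  have hmono := monotone_cdf ν
  have hmeas : Measurable (cdf ν) := hmono.measurable
  have hcont : Continuous (cdf ν) := by
    rw [continuous_iff_continuousAt]
    intro a
    rw [hmono.continuousAt_iff_leftLim_eq_rightLim, StieltjesFunction.rightLim_eq]
    have h := (cdf ν).measure_singleton a
    rw [measure_cdf, measure_singleton] at h
    have h2 := ENNReal.ofReal_eq_zero.1 h.symm
    have h3 := hmono.leftLim_le (le_refl a)
    linarith
  have : IsProbabilityMeasure (ν.map (cdf ν)) :=
    Measure.isProbabilityMeasure_map hmeas.aemeasurable
  refine Measure.ext_of_Iic _ _ fun u => ?_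
  rw [Measure.map_apply hmeas measurableSet_Iic, Measure.restrict_apply measurableSet_Iic]
  rcases lt_or_ge u 0 with hu | hu
  · have h1 : (cdf ν) ⁻¹' Set.Iic u = ∅ := by
      ext x
      simp only [Set.mem_preimage, Set.mem_Iic, Set.mem_empty_iff_false, iff_false, not_le]
      exact hu.trans_le (cdf_nonneg ν x)
    have h2 : Set.Iic u ∩ Set.Icc (0:ℝ) 1 = ∅ := by
      ext x
      simp only [Set.mem_inter_iff, Set.mem_Iic, Set.mem_Icc, Set.mem_empty_iff_false, iff_false]
      rintro ⟨a, b, c⟩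
      linarith
    rw [h1, h2, measure_empty, measure_empty]
  rcases le_or_gt 1 u with hu1 | hu1
  · have h1 : (cdf ν) ⁻¹' Set.Iic u = Set.univ := by
      ext x
      simpa using (cdf_le_one ν x).trans hu1
    have h2 : Set.Iic u ∩ Set.Icc (0:ℝ) 1 = Set.Icc 0 1 := by
      ext x
      simp only [Set.mem_inter_iff, Set.mem_Iic, Set.mem_Icc]
      constructor
      · exact fun h => h.2
      · exact fun h => ⟨h.2.trans hu1, h⟩
    rw [h1, h2, measure_univ]
    simp
  have h2 : Set.Iic u ∩ Set.Icc (0:ℝ) 1 = Set.Icc 0 u := by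
    ext x
    simp only [Set.mem_inter_iff, Set.mem_Iic, Set.mem_Icc]
    constructor
    · exact fun h => ⟨h.2.1, h.1⟩
    · exact fun h => ⟨h.2, h.1, h.2.trans hu1.le⟩
  rw [h2, Real.volume_Icc, sub_zero]
  rcases Set.eq_empty_or_nonempty ((cdf ν) ⁻¹' Set.Iic u) with he | hne
  · have : u ≤ 0 := by
      refine ge_of_tendsto (tendsto_cdf_atBot ν) (Eventually.of_forall fun x => ?_)
      by_contra hx
      have : x ∈ (cdf ν) ⁻¹' Set.Iic u := (not_le.1 hx).le
      rw [he] at this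
      exact this
    rw [he, measure_empty, ENNReal.ofReal_of_nonpos this]
  · have hcl : IsClosed ((cdf ν) ⁻¹' Set.Iic u) := isClosed_Iic.preimage hcont
    obtain ⟨b, hb⟩ := ((tendsto_cdf_atTop ν).eventually_const_lt hu1).exists
    have hbdd : BddAbove ((cdf ν) ⁻¹' Set.Iic u) := by
      refine ⟨b, fun x hx => ?_⟩
      by_contra hxb
      have h1 := hmono (not_le.1 hxb).le
      have h2 : cdf ν x ≤ u := hx
      linarith
    have htm := hcl.csSup_mem hne hbdd
    set t := sSup ((cdf ν) ⁻¹' Set.Iic u) with ht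
    have hS : (cdf ν) ⁻¹' Set.Iic u = Set.Iic t := by
      ext x
      constructor
      · exact fun hx => le_csSup hbdd hx
      · exact fun hx => (hmono hx).trans htm
    have hFt : cdf ν t = u := by
      refine le_antisymm htm ?_
      have h1 : Tendsto (cdf ν) (𝓝[>] t) (𝓝 (cdf ν t)) :=
        (hcont.tendsto t).mono_left nhdsWithin_le_nhds
      refine ge_of_tendsto h1 ?_
      filter_upwards [self_mem_nhdsWithin] with x hx
      by_contra hxu
      have : x ∈ (cdf ν) ⁻¹' Set.Iic u := (not_le.1 hxu).le
      rw [hS] at this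
      exact (not_lt.2 (Set.mem_Iic.1 this)) (Set.mem_Ioi.1 hx)
    rw [hS, ← ofReal_cdf, hFt]

lemma hyperplane_null (μ : Measure ℝ) [IsProbabilityMeasure μ] [NullSingletonClass μ] (n : ℕ) (hn : 0 < n)
    (c : ℝ) : (Measure.pi fun _ : Fin n => μ) {y | ∑ i, y i = c} = 0 := by
  obtain ⟨m, rfl⟩ := Nat.exists_eq_succ_of_ne_zero hn.ne'
  have hp := measurePreserving_piFinSuccAbove (fun _ : Fin (m+1) => μ) 0
  have hms : MeasurableSet {z : ℝ × (Fin m → ℝ) | z.1 + ∑ i, z.2 i = c} :=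
    measurableSet_eq_fun (by fun_prop) (by fun_prop)
  have hset : {y : Fin (m+1) → ℝ | ∑ i, y i = c} =
      (MeasurableEquiv.piFinSuccAbove (fun _ : Fin (m+1) => ℝ) 0) ⁻¹'
        {z : ℝ × (Fin m → ℝ) | z.1 + ∑ i, z.2 i = c} := by
    ext y
    simp [MeasurableEquiv.piFinSuccAbove, Fin.sum_univ_succ, Fin.removeNth, Fin.tail]
  have h := hp.measure_preimage hms.nullMeasurableSet
  rw [Nat.succ_eq_add_one, hset]
  refine h.trans ?_
  rw [Measure.prod_apply_symm hms]
  refine (lintegral_congr fun w => ?_).trans lintegral_zero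
  have : (fun x => (x, w)) ⁻¹' {z : ℝ × (Fin m → ℝ) | z.1 + ∑ i, z.2 i = c}
      = {c - ∑ i, w i} := by
    ext x
    simp [eq_sub_iff_add_eq]
  rw [this, measure_singleton]

lemma likelihood_gauss (v : NNReal) {n : ℕ} (x : Fin n → ℝ) (θ : ℝ) :
    likelihood (fun t x => gaussianPDFReal t v x) x θ
      = ((√(2 * Real.pi * v))⁻¹) ^ n * Real.exp (-(∑ i, (x i - θ) ^ 2) / (2 * v)) := by
  simp only [likelihood, gaussianPDFReal]
  rw [Finset.prod_mul_distrib, Finset.prod_const, Finset.card_univ, Fintype.card_fin,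
    ← Real.exp_sum, ← Finset.sum_div, Finset.sum_neg_distrib]

lemma sum_sq_decomp {n : ℕ} (hn : 0 < n) (x : Fin n → ℝ) (θ : ℝ) :
    ∑ i, (x i - θ) ^ 2 = ∑ i, (x i - (∑ j, x j) / n) ^ 2 + (∑ j, x j - n * θ) ^ 2 / n := by
  have hn' : (n : ℝ) ≠ 0 := by positivity
  have key : ∀ a : ℝ, ∑ i, (x i - a) ^ 2 = ∑ i, (x i) ^ 2 - 2 * a * ∑ i, x i + n * a ^ 2 := by
    intro a
    simp_rw [sub_sq, Finset.sum_add_distrib, Finset.sum_sub_distrib]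
    rw [Finset.mul_sum]
    simp
    exact Finset.sum_congr rfl fun i _ => by ring
  rw [key, key]
  field_simp
  ring

lemma relLik_gauss (v : NNReal) (hv : 0 < v) {n : ℕ} (hn : 0 < n) (x : Fin n → ℝ) (θ : ℝ) :
    relLik (fun t x => gaussianPDFReal t v x) x θ
      = Real.exp (-((∑ j, x j - n * θ) ^ 2 / n) / (2 * v)) := by
  have hv' : (0 : ℝ) < v := hv
  have hn' : (0 : ℝ) < n := by exact_mod_cast hn
  set C : ℝ := ((√(2 * Real.pi * v))⁻¹) ^ n *
    Real.exp (-(∑ i, (x i - (∑ j, x j) / n) ^ 2) / (2 * v)) with hC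
  have hCpos : 0 < C := by positivity
  have hL : ∀ θ, likelihood (fun t x => gaussianPDFReal t v x) x θ
      = C * Real.exp (-((∑ j, x j - n * θ) ^ 2 / n) / (2 * v)) := by
    intro θ
    rw [likelihood_gauss, sum_sq_decomp hn, hC, mul_assoc (_ ^ n), ← Real.exp_add]
    congr 2
    ring
  have hle : ∀ θ, likelihood (fun t x => gaussianPDFReal t v x) x θ ≤ C := by
    intro θ
    rw [hL]
    refine mul_le_of_le_one_right hCpos.le (Real.exp_le_one_iff.2 ?_)
    rw [neg_div]
    have : 0 ≤ (∑ j, x j - n * θ) ^ 2 / n / (2 * (v : ℝ)) := by positivity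
    linarith
  have hsup : ⨆ ϑ, likelihood (fun t x => gaussianPDFReal t v x) x ϑ = C := by
    refine le_antisymm (ciSup_le hle) ?_
    refine le_trans (le_of_eq ?_) (le_ciSup ⟨C, by rintro _ ⟨θ, rfl⟩; exact hle θ⟩ ((∑ j, x j) / n))
    rw [hL, mul_div_cancel₀ _ hn'.ne']
    simp
  rw [relLik, hsup, hL, mul_div_cancel_left₀ _ hCpos.ne']

/-- in the Gaussian location model `N(Θ, σ²)` with `σ² = v > 0`
known, the IM contour evaluated at the true parameter is exactly uniformly
distributed: under `P_Θ^n`, the random variable `π_{X^n}(Θ)` has the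
Uniform(0,1) distribution, for every `n ≥ 1`. -/
theorem gaussian_location_im_contour_uniform (v : NNReal) (hv : 0 < v)
    (Θ : ℝ) (n : ℕ) (hn : 0 < n) :
    (Measure.pi fun _ : Fin n => gaussianReal Θ v).map
        (fun xn =>
          contour (fun t => gaussianReal t v) (fun t x => gaussianPDFReal t v x) xn Θ)
      = volume.restrict (Set.Icc (0 : ℝ) 1) := by
  have := nullSingletonClass_gaussianReal (μ := Θ) hv.ne'
  set μ := Measure.pi fun _ : Fin n => gaussianReal Θ v with hμ
  set T : (Fin n → ℝ) → ℝ := fun x => relLik (fun t x => gaussianPDFReal t v x) x Θ with hT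
  have hTe : T = fun x => Real.exp (-((∑ j, x j - n * Θ) ^ 2 / n) / (2 * v)) :=
    funext fun x => relLik_gauss v hv hn x Θ
  have hTm : Measurable T := by
    rw [hTe]
    fun_prop
  have : IsProbabilityMeasure (μ.map T) := Measure.isProbabilityMeasure_map hTm.aemeasurable
  have : NullSingletonClass (μ.map T) := by
    refine ⟨fun c => ?_⟩
    rw [Measure.map_apply hTm (measurableSet_singleton c)]
    rcases Set.eq_empty_or_nonempty (T ⁻¹' {c}) with he | ⟨x, hx⟩
    · rw [he, measure_empty]
    set a := ∑ j, x j - n * Θ with ha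
    have hsub : T ⁻¹' {c} ⊆ {y | ∑ i, y i = n * Θ + a} ∪ {y | ∑ i, y i = n * Θ - a} := by
      intro y hy
      have hxy : T y = T x := (Set.mem_singleton_iff.1 hy).trans (Set.mem_singleton_iff.1 hx).symm
      rw [hTe] at hxy
      have h1 := Real.exp_injective hxy
      have hv' : (v : ℝ) ≠ 0 := by exact_mod_cast hv.ne'
      have hn' : (n : ℝ) ≠ 0 := by exact_mod_cast hn.ne'
      have h2 : (∑ j, y j - n * Θ) ^ 2 = a ^ 2 := by
        rw [div_left_inj' (by positivity), neg_inj, div_left_inj' hn'] at h1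
        exact h1
      rcases sq_eq_sq_iff_eq_or_eq_neg.1 h2 with h | h
      · left
        change ∑ j, y j = _
        linarith
      · right
        change ∑ j, y j = _
        linarith
    refine measure_mono_null hsub (measure_union_null ?_ ?_)
    · exact hyperplane_null _ n hn _
    · exact hyperplane_null _ n hn _
  have hc : (fun xn => contour (fun t => gaussianReal t v)
      (fun t x => gaussianPDFReal t v x) xn Θ) = (cdf (μ.map T)) ∘ T := by
    funext x
    rw [Function.comp_apply, cdf_eq_real, measureReal_def, Measure.map_apply hTm measurableSet_Iic]
    rfl
  rw [hc, ← Measure.map_map (monotone_cdf _).measurable hTm, pit_aux]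
end
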